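/- For every real a > 0, the absolutely convergent integral ∫₁^∞ e^{iax} · (ln x)/x² dx equals 1 + ia·[ −π²/24 + γ·(γ/2 + ln a − 1) + (ln a)²/2 − ln a + 1 − (iπ/2)·(γ + ln a − 1) ] + Σ_{n=1}^∞ (ia)^{n+1} / ((n+1)! · n²), where γ is the Euler–Mascheroni constant and the series converges absolutely. -/

import Mathlib

open MeasureTheory

/-!
Write `e^{iax} = e^{-zx}` with `z = -ia` and let `h(x) = (log x)² / 2 + log x`, so that
`h'' = -log x / x²`, `h(1) = 0` and `h'(1) = 1`. For `Re z > 0`, integrating by parts twice turns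
`∫₁^∞ e^{-zx} log x / x² dx` into `e^{-z} - z² ∫₁^∞ h(x) e^{-zx} dx`, and the last integral is
`∫₀^∞ - ∫₀¹`. The first is elementary in `Γ'(1) = -γ` and `Γ''(1) = γ² + π²/6`, because
`∫₀^∞ x^{s-1} e^{-zx} dx = z^{-s} Γ(s)` may be differentiated in `s`; expanding `e^{-zx}` in the
second gives the series. Both sides of the resulting identity are continuous on
`{Re z ≥ 0, z ≠ 0}`, which contains `-ia`.
-/

open Asymptotics Complex Filter Set Topology

theorem hasMellin_log_pow_smul_of_isBigO_rpow {E : Type*} [NormedAddCommGroup E] [NormedSpace ℂ E]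
    {a b : ℝ} {f : ℝ → E} {s : ℂ} (hfc : LocallyIntegrableOn f (Ioi 0))
    (hf_top : f =O[atTop] (· ^ (-a))) (hs_top : s.re < a)
    (hf_bot : f =O[𝓝[>] 0] (· ^ (-b))) (hs_bot : b < s.re) (k : ℕ) :
    HasMellin (fun t => Real.log t ^ k • f t) s (iteratedDeriv k (mellin f) s) := by
  induction k generalizing a b f with
  | zero =>
    simpa only [pow_zero, one_smul, iteratedDeriv_zero, HasMellin, and_true] using
      mellinConvergent_of_isBigO_rpow hfc hf_top hs_top hf_bot hs_bot
  | succ k ih =>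
    obtain ⟨a', hsa', ha'⟩ := exists_between hs_top
    obtain ⟨b', hb', hb's⟩ := exists_between hs_bot
    have hlog : LocallyIntegrableOn (fun t => Real.log t • f t) (Ioi 0) :=
      hfc.continuousOn_smul isOpen_Ioi.isLocallyClosed
        (Real.continuousOn_log.mono fun t ht => (mem_Ioi.1 ht).ne')
    have hderiv : deriv (mellin f) =ᶠ[𝓝 s] mellin fun t => Real.log t • f t := by
      filter_upwards [continuous_re.continuousAt.eventually_lt_const hs_top,
        continuous_re.continuousAt.eventually_const_lt hs_bot] with w hw_top hw_bot
      exact (mellin_hasDerivAt_of_isBigO_rpow hfc hf_top hw_top hf_bot hw_bot).2.deriv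
    simpa only [iteratedDeriv_succ', hderiv.iteratedDeriv_eq, pow_succ, mul_smul] using
      ih hlog (isBigO_rpow_top_log_smul ha' hf_top) hsa' (isBigO_rpow_zero_log_smul hb' hf_bot) hb's

theorem integral_Ioc_log_pow_mul_cpow {s : ℂ} (hs : 0 < s.re) (k : ℕ) :
    IntegrableOn (fun t : ℝ => (Real.log t : ℂ) ^ k * (t : ℂ) ^ (s - 1)) (Ioc 0 1) ∧
      ∫ t in Ioc (0 : ℝ) 1, (Real.log t : ℂ) ^ k * (t : ℂ) ^ (s - 1) =
        (-1) ^ k * k.factorial / s ^ (k + 1) := by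
  set f : ℝ → ℂ := indicator (Ioc 0 1) fun _ => 1
  have hf_loc : LocallyIntegrableOn f (Ioi 0) :=
    ((integrable_indicator_iff measurableSet_Ioc).2
      (by simp [IntegrableOn])).locallyIntegrable.locallyIntegrableOn _
  have hf_top : f =O[atTop] (· ^ (-(s.re + 1))) := by
    refine (isBigO_zero _ _).congr' ?_ EventuallyEq.rfl
    filter_upwards [eventually_gt_atTop 1] with t ht
    exact (indicator_of_notMem (fun h => ht.not_ge h.2) _).symm
  have hf_bot : f =O[𝓝[>] 0] (· ^ (-(0 : ℝ))) := by
    refine IsBigO.of_norm_le fun t => ?_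
    rw [neg_zero, Real.rpow_zero]
    exact (norm_indicator_le_norm_self _ _).trans_eq norm_one
  obtain ⟨hconv, hmellin⟩ :=
    hasMellin_log_pow_smul_of_isBigO_rpow hf_loc hf_top (lt_add_one _) hf_bot hs k
  have hinv : mellin f =ᶠ[𝓝 s] Inv.inv := by
    filter_upwards [continuous_re.continuousAt.eventually_const_lt hs] with w hw
    exact (hasMellin_one_Ioc hw).2.trans (one_div w)
  have hfun : (fun t : ℝ => (t : ℂ) ^ (s - 1) • Real.log t ^ k • f t) =
      indicator (Ioc 0 1) fun t : ℝ => (Real.log t : ℂ) ^ k * (t : ℂ) ^ (s - 1) := by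
    ext t
    by_cases ht : t ∈ Ioc (0 : ℝ) 1 <;> simp [f, ht, mul_comm]
  have hset : Ioi (0 : ℝ) ∩ Ioc 0 1 = Ioc 0 1 := inter_eq_right.2 Ioc_subset_Ioi_self
  rw [MellinConvergent, hfun, integrableOn_indicator_iff measurableSet_Ioc, inter_comm, hset]
    at hconv
  rw [hinv.iteratedDeriv_eq, iteratedDeriv_eq_iterate, iter_deriv_inv, mellin, hfun,
    setIntegral_indicator measurableSet_Ioc, hset] at hmellin
  refine ⟨hconv, hmellin.trans ?_⟩
  rw [div_eq_mul_inv, ← zpow_natCast s, ← zpow_neg]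
  congr 2
  push_cast
  ring

theorem isOpen_setOf_re_pos : IsOpen {z : ℂ | 0 < z.re} :=
  isOpen_lt continuous_const continuous_re

theorem analyticAt_Gamma_of_re_pos {s : ℂ} (hs : 0 < s.re) : AnalyticAt ℂ Gamma s := by
  refine DifferentiableOn.analyticAt (s := {w : ℂ | 0 < w.re}) (fun w hw => ?_)
    (isOpen_setOf_re_pos.mem_nhds hs)
  refine (differentiableAt_Gamma w fun m hm => ?_).differentiableWithinAt
  have hneg : 0 < (-(m : ℂ)).re := hm ▸ hw
  simp only [neg_re, natCast_re, Left.neg_pos_iff] at hneg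
  exact hneg.not_ge m.cast_nonneg

theorem Gamma_one_add_mul_Gamma_one_sub {s : ℂ} (hs : s ≠ 0) :
    Gamma (1 + s) * Gamma (1 - s) = Real.pi * s / sin (Real.pi * s) := by
  rw [add_comm, Gamma_add_one s hs, mul_assoc, Gamma_mul_Gamma_one_sub]
  ring

theorem eventually_Gamma_one_add_mul_Gamma_one_sub_mul_sin :
    ∀ᶠ s : ℂ in 𝓝 0, Gamma (1 + s) * Gamma (1 - s) * sin (Real.pi * s) = Real.pi * s := by
  have hsin : HasDerivAt (fun s : ℂ => sin (Real.pi * s)) Real.pi 0 := by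
    simpa using ((hasDerivAt_id (0 : ℂ)).const_mul (Real.pi : ℂ)).csin
  have hne : ∀ᶠ s : ℂ in 𝓝[≠] 0, sin (Real.pi * s) ≠ 0 :=
    hsin.eventually_ne (ofReal_ne_zero.2 Real.pi_ne_zero)
  filter_upwards [eventually_nhdsWithin_iff.1 hne] with s hs
  rcases eq_or_ne s 0 with rfl | hs0
  · simp
  · rw [Gamma_one_add_mul_Gamma_one_sub hs0, div_mul_cancel₀ _ (hs hs0)]

theorem iteratedDeriv_two_Gamma_one :
    iteratedDeriv 2 Gamma 1 = (Real.eulerMascheroniConstant : ℂ) ^ 2 + (Real.pi : ℂ) ^ 2 / 6 := by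
  have hpi : (Real.pi : ℂ) ≠ 0 := ofReal_ne_zero.2 Real.pi_ne_zero
  have hGamma : AnalyticAt ℂ Gamma 1 := analyticAt_Gamma_of_re_pos (by simp)
  have hadd : AnalyticAt ℂ (fun s : ℂ => Gamma (1 + s)) 0 :=
    AnalyticAt.fun_comp (by simpa using hGamma) (by fun_prop)
  have hsub : AnalyticAt ℂ (fun s : ℂ => Gamma (1 - s)) 0 :=
    AnalyticAt.fun_comp (by simpa using hGamma) (by fun_prop)
  set P : ℂ → ℂ := (fun s : ℂ => Gamma (1 + s)) * fun s : ℂ => Gamma (1 - s) with hP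
  have hP_deriv (k : ℕ) : iteratedDeriv k P 0 = ∑ i ∈ Finset.range (k + 1),
      k.choose i * iteratedDeriv i Gamma 1 * ((-1) ^ (k - i) * iteratedDeriv (k - i) Gamma 1) := by
    simp [hP, iteratedDeriv_mul hadd.contDiffAt hsub.contDiffAt, iteratedDeriv_comp_const_add,
      iteratedDeriv_comp_const_sub]
  have hsin_deriv (k : ℕ) : iteratedDeriv k (fun s : ℂ => sin (Real.pi * s)) 0 =
      Real.pi ^ k * iteratedDeriv k sin 0 := by
    simp [iteratedDeriv_comp_const_mul contDiff_sin]
  -- `P s * sin (π s) = π s` is linear in `s`; the second derivative of `Γ` at `1` enters the third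
  -- derivative of the left side at `0` through that of `P`.
  have hthird : iteratedDeriv 3 (P * fun s : ℂ => sin (Real.pi * s)) 0 = 0 := by
    have heq : (P * fun s : ℂ => sin (Real.pi * s)) =ᶠ[𝓝 0] fun s => Real.pi * s :=
      eventually_Gamma_one_add_mul_Gamma_one_sub_mul_sin
    rw [heq.iteratedDeriv_eq]
    simp [iteratedDeriv_succ']
  have hP_analytic : AnalyticAt ℂ P 0 := hadd.mul hsub
  rw [iteratedDeriv_mul hP_analytic.contDiffAt (by fun_prop)] at hthird
  simp only [hP_deriv, hsin_deriv, Finset.sum_range_succ, Finset.sum_range_zero, Nat.reduceSub,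
    iteratedDeriv_add_one_sin, iteratedDeriv_add_one_cos, iteratedDeriv_zero] at hthird
  have hcoeff : 3 * (2 * iteratedDeriv 2 Gamma 1 - 2 * Real.eulerMascheroniConstant ^ 2) *
      (Real.pi : ℂ) - (Real.pi : ℂ) ^ 3 = 0 := by
    simp only [iteratedDeriv_one, hasDerivAt_Gamma_one.deriv, Gamma_one] at hthird
    norm_num at hthird
    linear_combination hthird
  refine mul_left_cancel₀ hpi ?_
  linear_combination hcoeff / 6

theorem mem_slitPlane_of_re_nonneg {z : ℂ} (hz : 0 ≤ z.re) (hz0 : z ≠ 0) : z ∈ slitPlane := by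
  refine mem_slitPlane_iff.2 (hz.lt_or_eq.imp_right fun hre him => hz0 ?_)
  exact Complex.ext hre.symm him

theorem eqOn_re_pos_of_forall_ofReal {E : Type*} [NormedAddCommGroup E] [NormedSpace ℂ E]
    [CompleteSpace E] {f g : ℂ → E} (hf : DifferentiableOn ℂ f {z | 0 < z.re})
    (hg : DifferentiableOn ℂ g {z | 0 < z.re}) (hfg : ∀ r : ℝ, 0 < r → f r = g r) :
    EqOn f g {z | 0 < z.re} := by
  have hreal : Tendsto ((↑) : ℝ → ℂ) (𝓝[≠] 1) (𝓝[≠] 1) := by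
    simpa using (continuous_ofReal.continuousWithinAt (s := {1}ᶜ) (x := 1)).tendsto_nhdsWithin
      fun r (hr : r ≠ 1) => show (r : ℂ) ≠ (1 : ℝ) from ofReal_injective.ne hr
  refine (hf.analyticOnNhd isOpen_setOf_re_pos).eqOn_of_preconnected_of_frequently_eq
    (hg.analyticOnNhd isOpen_setOf_re_pos) (convex_halfSpace_re_gt 0).isPreconnected
    (z₀ := 1) (by simp) (hreal.frequently (Eventually.frequently ?_))
  filter_upwards [nhdsWithin_le_nhds (eventually_gt_nhds one_pos)] using hfg

theorem norm_cexp_neg_mul_ofReal (z : ℂ) (t : ℝ) : ‖cexp (-(z * t))‖ = Real.exp (-(z.re * t)) := by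
  simp [norm_exp]

theorem isBigO_atTop_cexp_neg_mul {z : ℂ} (hz : 0 < z.re) (b : ℝ) :
    (fun t : ℝ => cexp (-(z * t))) =O[atTop] (· ^ b) := by
  refine IsBigO.of_norm_left ?_
  simpa only [norm_cexp_neg_mul_ofReal, neg_mul] using
    (isLittleO_exp_neg_mul_rpow_atTop hz b).isBigO

theorem isBigO_nhdsGT_zero_cexp_neg_mul (z : ℂ) :
    (fun t : ℝ => cexp (-(z * t))) =O[𝓝[>] 0] (· ^ (-(0 : ℝ))) := by
  have hcont : Continuous fun t : ℝ => cexp (-(z * t)) := by fun_prop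
  simpa only [neg_zero, Real.rpow_zero] using hcont.continuousWithinAt.tendsto.isBigO_one ℝ

theorem norm_ofReal_mul_cexp_neg_mul_le {r : ℝ} (hr : 0 < r) {z : ℂ} (hz : 2 * r ≤ z.re) {t : ℝ}
    (ht : 0 ≤ t) : ‖(t : ℂ) * cexp (-(z * t))‖ ≤ r⁻¹ * ‖cexp (-(r * t : ℂ))‖ := by
  have hlin : t ≤ r⁻¹ * Real.exp (r * t) := by
    rw [← div_eq_inv_mul, le_div_iff₀' hr]
    exact (le_add_of_nonneg_right zero_le_one).trans (Real.add_one_le_exp _)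
  rw [norm_mul, norm_real, Real.norm_of_nonneg ht, norm_cexp_neg_mul_ofReal,
    norm_cexp_neg_mul_ofReal, ofReal_re]
  calc t * Real.exp (-(z.re * t))
      ≤ r⁻¹ * Real.exp (r * t) * Real.exp (-(z.re * t)) := by gcongr
    _ = r⁻¹ * Real.exp (r * t - z.re * t) := by rw [mul_assoc, ← Real.exp_add, sub_eq_add_neg]
    _ ≤ r⁻¹ * Real.exp (-(r * t)) := by
      gcongr
      linarith [mul_le_mul_of_nonneg_right hz ht]

theorem differentiableOn_integral_mul_cexp_neg_mul {g : ℝ → ℂ}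
    (hg : ∀ z : ℂ, 0 < z.re → IntegrableOn (fun t : ℝ => g t * cexp (-(z * t))) (Ioi 0)) :
    DifferentiableOn ℂ (fun z => ∫ t in Ioi (0 : ℝ), g t * cexp (-(z * t))) {z | 0 < z.re} := by
  intro z hz
  obtain ⟨r, hr, hrz⟩ : ∃ r : ℝ, 0 < r ∧ 2 * r < z.re :=
    ⟨z.re / 4, div_pos hz four_pos, by linarith [show 0 < z.re from hz]⟩
  have hderiv (w : ℂ) (t : ℝ) : HasDerivAt (fun w : ℂ => g t * cexp (-(w * t)))
      (-t * (g t * cexp (-(w * t)))) w := by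
    convert! ((hasDerivAt_mul_const (t : ℂ)).fun_neg (x := w)).cexp.const_mul (g t) using 1
    ring
  have hbound : ∀ᵐ t ∂volume.restrict (Ioi (0 : ℝ)), ∀ w ∈ {w : ℂ | 2 * r < w.re},
      ‖-t * (g t * cexp (-(w * t)))‖ ≤ r⁻¹ * ‖g t * cexp (-(r * t : ℂ))‖ := by
    filter_upwards [ae_restrict_mem measurableSet_Ioi] with t ht w hw
    calc ‖-t * (g t * cexp (-(w * t)))‖ = ‖g t‖ * ‖(t : ℂ) * cexp (-(w * t))‖ := by
          rw [neg_mul, norm_neg, mul_left_comm, norm_mul]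
      _ ≤ ‖g t‖ * (r⁻¹ * ‖cexp (-(r * t : ℂ))‖) := by
          gcongr
          exact norm_ofReal_mul_cexp_neg_mul_le hr (le_of_lt hw) (le_of_lt ht)
      _ = r⁻¹ * ‖g t * cexp (-(r * t : ℂ))‖ := by rw [norm_mul, mul_left_comm]
  have hmem : {w : ℂ | 2 * r < w.re} ∈ 𝓝 z :=
    (isOpen_lt continuous_const continuous_re).mem_nhds hrz
  exact (hasDerivAt_integral_of_dominated_loc_of_deriv_le
    (F := fun w (t : ℝ) => g t * cexp (-(w * t))) hmem
    ((isOpen_setOf_re_pos.eventually_mem hz).mono fun w hw => (hg w hw).aestronglyMeasurable)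
    (hg z hz) (continuous_ofReal.neg.aestronglyMeasurable.mul (hg z hz).aestronglyMeasurable)
    hbound ((hg r hr).norm.const_mul r⁻¹)
    (Eventually.of_forall fun t w _ => hderiv w t)).2.differentiableAt.differentiableWithinAt

theorem norm_cexp_neg_mul_le_one {z : ℂ} (hz : 0 ≤ z.re) {t : ℝ} (ht : 0 ≤ t) :
    ‖cexp (-(z * t))‖ ≤ 1 := by
  rw [norm_cexp_neg_mul_ofReal, Real.exp_le_one_iff, neg_nonpos]
  positivity

theorem integrableOn_mul_cexp_neg_mul {S : Set ℝ} (hS : MeasurableSet S) (hS0 : S ⊆ Ici 0)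
    {g : ℝ → ℂ} (hg : IntegrableOn g S) {z : ℂ} (hz : 0 ≤ z.re) :
    IntegrableOn (fun t : ℝ => g t * cexp (-(z * t))) S := by
  refine Integrable.mul_bdd (c := 1) hg (Continuous.aestronglyMeasurable (by fun_prop)) ?_
  filter_upwards [ae_restrict_mem hS] with t ht using norm_cexp_neg_mul_le_one hz (hS0 ht)

theorem continuousOn_integral_mul_cexp_neg_mul {S : Set ℝ} (hS : MeasurableSet S)
    (hS0 : S ⊆ Ici 0) {g : ℝ → ℂ} (hg : IntegrableOn g S) :
    ContinuousOn (fun z => ∫ t in S, g t * cexp (-(z * t))) {z | 0 ≤ z.re} := by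
  refine continuousOn_of_dominated
    (fun z hz => (integrableOn_mul_cexp_neg_mul hS hS0 hg hz).aestronglyMeasurable)
    (fun z hz => ?_) hg.norm (Eventually.of_forall fun t => by fun_prop)
  filter_upwards [ae_restrict_mem hS] with t ht
  rw [norm_mul]
  exact mul_le_of_le_one_right (norm_nonneg _) (norm_cexp_neg_mul_le_one hz (hS0 ht))

theorem locallyIntegrable_cexp_neg_mul (z : ℂ) :
    LocallyIntegrable (fun t : ℝ => cexp (-(z * t))) :=
  Continuous.locallyIntegrable (by fun_prop)

theorem mellin_cexp_neg_mul {z s : ℂ} (hz : 0 < z.re) (hs : 0 < s.re) :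
    mellin (fun t : ℝ => cexp (-(z * t))) s = z ^ (-s) * Gamma s := by
  have hint (w : ℂ) (hw : 0 < w.re) :
      IntegrableOn (fun t : ℝ => (t : ℂ) ^ (s - 1) * cexp (-(w * t))) (Ioi 0) :=
    mellinConvergent_of_isBigO_rpow ((locallyIntegrable_cexp_neg_mul w).locallyIntegrableOn _)
      (isBigO_atTop_cexp_neg_mul hw _) (lt_add_one s.re) (isBigO_nhdsGT_zero_cexp_neg_mul w) hs
  refine eqOn_re_pos_of_forall_ofReal (differentiableOn_integral_mul_cexp_neg_mul hint)
    (g := fun w => w ^ (-s) * Gamma s) (fun w hw => ?_) (fun r hr => ?_) hz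
  · have hw0 : w ∈ slitPlane := Or.inl hw
    fun_prop (disch := assumption)
  · rw [integral_cpow_mul_exp_neg_mul_Ioi hs hr, one_div, inv_cpow, cpow_neg]
    rw [arg_ofReal_of_nonneg hr.le]
    exact Real.pi_ne_zero.symm

theorem integral_log_pow_mul_cexp_neg_mul {z : ℂ} (hz : 0 < z.re) (k : ℕ) :
    IntegrableOn (fun t : ℝ => (Real.log t : ℂ) ^ k * cexp (-(z * t))) (Ioi 0) ∧
      ∫ t in Ioi (0 : ℝ), (Real.log t : ℂ) ^ k * cexp (-(z * t)) =
        z⁻¹ * ∑ i ∈ Finset.range (k + 1),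
          k.choose i * (-log z) ^ i * iteratedDeriv (k - i) Gamma 1 := by
  have hz0 : z ≠ 0 := ne_zero_of_re_pos hz
  obtain ⟨hconv, hmellin⟩ := hasMellin_log_pow_smul_of_isBigO_rpow (s := 1)
    ((locallyIntegrable_cexp_neg_mul z).locallyIntegrableOn _)
    (isBigO_atTop_cexp_neg_mul hz _) (by norm_num : (1 : ℂ).re < 2)
    (isBigO_nhdsGT_zero_cexp_neg_mul z) (by simp) k
  have hGamma : mellin (fun t : ℝ => cexp (-(z * t))) =ᶠ[𝓝 1]
      (fun s => cexp (-log z * s)) * Gamma := by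
    filter_upwards [isOpen_setOf_re_pos.mem_nhds (show 0 < (1 : ℂ).re by simp)] with s hs
    rw [mellin_cexp_neg_mul hz hs, cpow_def_of_ne_zero hz0, Pi.mul_apply, mul_neg, neg_mul]
  have hleibniz : iteratedDeriv k ((fun s => cexp (-log z * s)) * Gamma) 1 =
      z⁻¹ * ∑ i ∈ Finset.range (k + 1),
          k.choose i * (-log z) ^ i * iteratedDeriv (k - i) Gamma 1 := by
    rw [iteratedDeriv_mul (by fun_prop) (analyticAt_Gamma_of_re_pos (by simp)).contDiffAt,
      Finset.mul_sum]
    refine Finset.sum_congr rfl fun i _ => ?_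
    rw [iteratedDeriv_cexp_const_mul]
    simp only [mul_one, exp_neg, exp_log hz0]
    ring
  have hfun (t : ℝ) : (t : ℂ) ^ ((1 : ℂ) - 1) • Real.log t ^ k • cexp (-(z * t)) =
      (Real.log t : ℂ) ^ k * cexp (-(z * t)) := by
    simp
  rw [hGamma.iteratedDeriv_eq, hleibniz] at hmellin
  simp only [mellin, MellinConvergent, hfun] at hmellin hconv
  exact ⟨hconv, hmellin⟩

theorem hasSum_integral_mul_cexp_neg_mul {S : Set ℝ} (hS : MeasurableSet S) {R : ℝ}
    (hR : ∀ t ∈ S, |t| ≤ R) {g : ℝ → ℂ} (hg : IntegrableOn g S) (z : ℂ) :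
    HasSum (fun n : ℕ => (-z) ^ n / n.factorial * ∫ t in S, g t * (t : ℂ) ^ n)
      (∫ t in S, g t * cexp (-(z * t))) := by
  have hbound (n : ℕ) : ∀ᵐ t ∂volume.restrict S,
      ‖(-z) ^ n / n.factorial * (g t * (t : ℂ) ^ n)‖ ≤
        (‖z‖ * R) ^ n / n.factorial * ‖g t‖ := by
    filter_upwards [ae_restrict_mem hS] with t ht
    simp only [norm_mul, norm_div, norm_pow, norm_neg, norm_natCast, norm_real, Real.norm_eq_abs]
    calc ‖z‖ ^ n / n.factorial * (‖g t‖ * |t| ^ n)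
        ≤ ‖z‖ ^ n / n.factorial * (‖g t‖ * R ^ n) := by gcongr; exact hR t ht
      _ = (‖z‖ * R) ^ n / n.factorial * ‖g t‖ := by rw [mul_pow]; ring
  have hseries (t : ℝ) : HasSum (fun n : ℕ => (-z) ^ n / n.factorial * (g t * (t : ℂ) ^ n))
      (g t * cexp (-(z * t))) := by
    have hexp := (NormedSpace.expSeries_div_hasSum_exp (-(z * t))).mul_left (g t)
    rw [← exp_eq_exp_ℂ] at hexp
    convert! hexp using 2 with n
    rw [← neg_mul, mul_pow]
    ring
  have hmeas (n : ℕ) : AEStronglyMeasurable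
      (fun t : ℝ => (-z) ^ n / n.factorial * (g t * (t : ℂ) ^ n)) (volume.restrict S) :=
    (hg.aestronglyMeasurable.mul (Continuous.aestronglyMeasurable (by fun_prop))).const_mul _
  simp only [← integral_const_mul]
  refine hasSum_integral_of_dominated_convergence
    (fun n t => (‖z‖ * R) ^ n / n.factorial * ‖g t‖) hmeas hbound
    (Eventually.of_forall fun t => (Real.summable_pow_div_factorial _).mul_right _) ?_
    (Eventually.of_forall hseries)
  simp only [tsum_mul_right]
  exact hg.norm.const_mul _

theorem integral_Ioi_sq_mul_sub_mul_cexp_neg_mul {u u' u'' : ℝ → ℂ} {a : ℝ} {z : ℂ}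
    (hu : ∀ x ∈ Ici a, HasDerivAt u (u' x) x) (hu' : ∀ x ∈ Ici a, HasDerivAt u' (u'' x) x)
    (hint : IntegrableOn (fun x : ℝ => (z ^ 2 * u x - u'' x) * cexp (-(z * x))) (Ioi a))
    (hlim : Tendsto (fun x : ℝ => (z * u x + u' x) * cexp (-(z * x))) atTop (𝓝 0)) :
    ∫ x in Ioi a, (z ^ 2 * u x - u'' x) * cexp (-(z * x)) =
      (z * u a + u' a) * cexp (-(z * a)) := by
  have hderiv (x : ℝ) (hx : x ∈ Ici a) :
      HasDerivAt (fun x : ℝ => -((z * u x + u' x) * cexp (-(z * x))))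
        ((z ^ 2 * u x - u'' x) * cexp (-(z * x))) x := by
    have hexp : HasDerivAt (fun x : ℝ => cexp (-(z * x))) (cexp (-(z * x)) * -(z * 1)) x :=
      ((hasDerivAt_id x).ofReal_comp.const_mul z).fun_neg.cexp
    convert! ((((hu x hx).const_mul z).add (hu' x hx)).mul hexp).fun_neg using 1
    simp only [Pi.add_apply]
    ring
  rw [integral_Ioi_of_hasDerivAt_of_tendsto' hderiv hint (by simpa using hlim.neg)]
  ring

/-- The second antiderivative `log² x / 2 + log x` of `-log x / x²` with value `0` and slope `1` at
`x = 1`. Both its Laplace transform and its moments on `(0, 1]` are explicit. -/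
noncomputable def logWeight (x : ℝ) : ℝ :=
  Real.log x ^ 2 / 2 + Real.log x

theorem hasDerivAt_logWeight {x : ℝ} (hx : x ≠ 0) :
    HasDerivAt logWeight ((Real.log x + 1) / x) x := by
  have hlog := Real.hasDerivAt_log hx
  convert! ((hlog.pow 2).div_const 2).add hlog using 1
  simp only [Nat.cast_ofNat, Nat.add_one_sub_one, pow_one]
  field_simp

theorem hasDerivAt_log_add_one_div {x : ℝ} (hx : x ≠ 0) :
    HasDerivAt (fun x => (Real.log x + 1) / x) (-(Real.log x / x ^ 2)) x := by
  convert! ((Real.hasDerivAt_log hx).add_const 1).div (hasDerivAt_id x) hx using 1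
  simp only [id]
  field_simp
  ring

theorem tendsto_log_add_one_div_atTop :
    Tendsto (fun x => (Real.log x + 1) / x) atTop (𝓝 0) := by
  simpa [add_div] using
    (Real.isLittleO_log_id_atTop.tendsto_div_nhds_zero).add tendsto_inv_atTop_zero

theorem integrableOn_Ioi_one_log_div_sq :
    IntegrableOn (fun x : ℝ => Real.log x / x ^ 2) (Ioi 1) := by
  have hneg : IntegrableOn (fun x : ℝ => -(Real.log x / x ^ 2)) (Ioi 1) :=
    integrableOn_Ioi_deriv_of_nonpos'
      (fun x hx => hasDerivAt_log_add_one_div (zero_lt_one.trans_le hx).ne')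
      (fun x hx => neg_nonpos.2 (div_nonneg (Real.log_nonneg (le_of_lt hx)) (sq_nonneg x)))
      tendsto_log_add_one_div_atTop
  simpa only [neg_neg] using hneg.fun_neg

theorem integral_logWeight_mul_cexp_neg_mul {z : ℂ} (hz : 0 < z.re) :
    IntegrableOn (fun t : ℝ => (logWeight t : ℂ) * cexp (-(z * t))) (Ioi 0) ∧
      ∫ t in Ioi (0 : ℝ), (logWeight t : ℂ) * cexp (-(z * t)) =
        z⁻¹ * (((Real.eulerMascheroniConstant + log z) ^ 2 + (Real.pi : ℂ) ^ 2 / 6) / 2 -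
          (Real.eulerMascheroniConstant + log z)) := by
  obtain ⟨hint₁, hval₁⟩ := integral_log_pow_mul_cexp_neg_mul hz 1
  obtain ⟨hint₂, hval₂⟩ := integral_log_pow_mul_cexp_neg_mul hz 2
  have hsplit (t : ℝ) : (logWeight t : ℂ) * cexp (-(z * t)) =
      (Real.log t : ℂ) ^ 2 * cexp (-(z * t)) / 2 + (Real.log t : ℂ) ^ 1 * cexp (-(z * t)) := by
    rw [logWeight]
    push_cast
    ring
  simp only [hsplit]
  refine ⟨(hint₂.div_const 2).add hint₁, ?_⟩
  rw [integral_add (hint₂.div_const 2) hint₁, integral_div, hval₁, hval₂]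
  simp only [Finset.sum_range_succ, Finset.sum_range_zero, Nat.sub_self, Nat.sub_zero,
    Nat.reduceSub, iteratedDeriv_zero, iteratedDeriv_one, iteratedDeriv_two_Gamma_one,
    hasDerivAt_Gamma_one.deriv, Gamma_one]
  norm_num
  ring

theorem integral_logWeight_mul_pow (n : ℕ) :
    IntegrableOn (fun t : ℝ => (logWeight t : ℂ) * (t : ℂ) ^ n) (Ioc 0 1) ∧
      ∫ t in Ioc (0 : ℝ) 1, (logWeight t : ℂ) * (t : ℂ) ^ n =
        1 / ((n : ℂ) + 1) ^ 3 - 1 / ((n : ℂ) + 1) ^ 2 := by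
  have hs : 0 < ((n : ℂ) + 1).re := by
    simp only [add_re, natCast_re, one_re]
    positivity
  obtain ⟨hint₁, hval₁⟩ := integral_Ioc_log_pow_mul_cpow hs 1
  obtain ⟨hint₂, hval₂⟩ := integral_Ioc_log_pow_mul_cpow hs 2
  have hsplit (t : ℝ) : (logWeight t : ℂ) * (t : ℂ) ^ n =
      (Real.log t : ℂ) ^ 2 * (t : ℂ) ^ ((n : ℂ) + 1 - 1) / 2 +
        (Real.log t : ℂ) ^ 1 * (t : ℂ) ^ ((n : ℂ) + 1 - 1) := by
    rw [logWeight, add_sub_cancel_right, cpow_natCast]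
    push_cast
    ring
  simp only [hsplit]
  refine ⟨(hint₂.div_const 2).add hint₁, ?_⟩
  rw [integral_add (hint₂.div_const 2) hint₁, integral_div, hval₁, hval₂]
  norm_num [Nat.factorial]
  ring

theorem integrableOn_Ioc_logWeight : IntegrableOn (fun t : ℝ => (logWeight t : ℂ)) (Ioc 0 1) := by
  simpa only [pow_zero, mul_one] using (integral_logWeight_mul_pow 0).1

theorem isLittleO_logWeight_id_atTop : logWeight =o[atTop] (id : ℝ → ℝ) := by
  have hsq := (Real.isLittleO_pow_log_id_atTop (n := 2)).const_mul_left (1 / 2)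
  exact (hsq.add Real.isLittleO_log_id_atTop).congr_left fun x => by rw [logWeight]; ring

theorem tendsto_logWeight_boundary_mul_cexp_neg_mul {z : ℂ} (hz : 0 < z.re) :
    Tendsto (fun x : ℝ => (z * logWeight x + ((Real.log x + 1) / x : ℝ)) * cexp (-(z * x)))
      atTop (𝓝 0) := by
  have hweight : (fun x : ℝ => z * logWeight x) =O[atTop] (id : ℝ → ℝ) :=
    (isBigO_ofReal_left.2 isLittleO_logWeight_id_atTop.isBigO).const_mul_left z
  have hslope : (fun x : ℝ => (((Real.log x + 1) / x : ℝ) : ℂ)) =O[atTop] (id : ℝ → ℝ) :=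
    isBigO_ofReal_left.2 <| (tendsto_log_add_one_div_atTop.isBigO_one ℝ).trans
      (isLittleO_const_id_atTop (1 : ℝ)).isBigO
  refine ((hweight.add hslope).mul (isBigO_atTop_cexp_neg_mul hz (-2))).trans_tendsto ?_
  refine tendsto_inv_atTop_zero.congr' ?_
  filter_upwards [eventually_gt_atTop 0] with x hx
  rw [id, Real.rpow_neg hx.le, Real.rpow_two]
  field_simp

theorem integral_Ioi_one_log_div_sq_mul_cexp_neg_mul_of_re_pos {z : ℂ} (hz : 0 < z.re) :
    ∫ x in Ioi (1 : ℝ), ((Real.log x / x ^ 2 : ℝ) : ℂ) * cexp (-(z * x)) =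
      cexp (-z) - z * (((Real.eulerMascheroniConstant + log z) ^ 2 + (Real.pi : ℂ) ^ 2 / 6) / 2 -
        (Real.eulerMascheroniConstant + log z)) +
      z ^ 2 * ∫ t in Ioc (0 : ℝ) 1, (logWeight t : ℂ) * cexp (-(z * t)) := by
  have hz0 : z ≠ 0 := ne_zero_of_re_pos hz
  obtain ⟨hint, hval⟩ := integral_logWeight_mul_cexp_neg_mul hz
  have hint_Ioi : IntegrableOn (fun t : ℝ => (logWeight t : ℂ) * cexp (-(z * t))) (Ioi 1) :=
    hint.mono_set (Ioi_subset_Ioi zero_le_one)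
  have hint_log : IntegrableOn (fun x : ℝ => ((Real.log x / x ^ 2 : ℝ) : ℂ) * cexp (-(z * x)))
      (Ioi 1) :=
    integrableOn_mul_cexp_neg_mul measurableSet_Ioi (Ioi_subset_Ici zero_le_one)
      integrableOn_Ioi_one_log_div_sq.ofReal hz.le
  have hadd (x : ℝ) : (z ^ 2 * logWeight x - ((-(Real.log x / x ^ 2) : ℝ) : ℂ)) * cexp (-(z * x)) =
      z ^ 2 * ((logWeight x : ℂ) * cexp (-(z * x))) +
        ((Real.log x / x ^ 2 : ℝ) : ℂ) * cexp (-(z * x)) := by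
    rw [ofReal_neg]
    ring
  have hparts := integral_Ioi_sq_mul_sub_mul_cexp_neg_mul (a := 1) (z := z)
    (fun x hx => (hasDerivAt_logWeight (zero_lt_one.trans_le hx).ne').ofReal_comp)
    (fun x hx => (hasDerivAt_log_add_one_div (zero_lt_one.trans_le hx).ne').ofReal_comp)
    (((hint_Ioi.const_mul _).add hint_log).congr (Eventually.of_forall fun x => (hadd x).symm))
    (tendsto_logWeight_boundary_mul_cexp_neg_mul hz)
  have hsplit := setIntegral_union Ioc_disjoint_Ioi_same measurableSet_Ioi
    (hint.mono_set Ioc_subset_Ioi_self) hint_Ioi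
  rw [Ioc_union_Ioi_eq_Ioi zero_le_one, hval, inv_mul_eq_iff_eq_mul₀ hz0] at hsplit
  have hboundary : (z * logWeight 1 + ((Real.log 1 + 1) / 1 : ℝ)) * cexp (-(z * (1 : ℝ))) =
      cexp (-z) := by
    simp [logWeight]
  simp only [hadd] at hparts
  rw [hboundary, integral_add (hint_Ioi.const_mul _) hint_log, integral_const_mul] at hparts
  linear_combination hparts + z * hsplit

theorem integral_Ioi_one_log_div_sq_mul_cexp_neg_mul {z : ℂ} (hz : 0 ≤ z.re) (hz0 : z ≠ 0) :
    ∫ x in Ioi (1 : ℝ), ((Real.log x / x ^ 2 : ℝ) : ℂ) * cexp (-(z * x)) =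
      cexp (-z) - z * (((Real.eulerMascheroniConstant + log z) ^ 2 + (Real.pi : ℂ) ^ 2 / 6) / 2 -
        (Real.eulerMascheroniConstant + log z)) +
      z ^ 2 * ∫ t in Ioc (0 : ℝ) 1, (logWeight t : ℂ) * cexp (-(z * t)) := by
  have hopen : EqOn _ _ {w : ℂ | 0 < w.re} :=
    fun w hw => integral_Ioi_one_log_div_sq_mul_cexp_neg_mul_of_re_pos hw
  have hsub : {w : ℂ | 0 < w.re} ⊆ {w | 0 ≤ w.re ∧ w ≠ 0} :=
    fun w hw => ⟨le_of_lt hw, ne_zero_of_re_pos hw⟩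
  have hdense : {w : ℂ | 0 ≤ w.re ∧ w ≠ 0} ⊆ closure {w | 0 < w.re} := by
    rw [closure_setOfPred_lt_re]
    exact fun w hw => hw.1
  have hlog : ContinuousOn log {w : ℂ | 0 ≤ w.re ∧ w ≠ 0} :=
    continuousOn_id.clog fun w hw => mem_slitPlane_of_re_nonneg hw.1 hw.2
  have hlhs : ContinuousOn _ {w : ℂ | 0 ≤ w.re ∧ w ≠ 0} :=
    (continuousOn_integral_mul_cexp_neg_mul measurableSet_Ioi (Ioi_subset_Ici zero_le_one)
      integrableOn_Ioi_one_log_div_sq.ofReal).mono fun w hw => hw.1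
  have hrhs : ContinuousOn _ {w : ℂ | 0 ≤ w.re ∧ w ≠ 0} :=
    (continuousOn_integral_mul_cexp_neg_mul measurableSet_Ioc
      (Ioc_subset_Ioi_self.trans Ioi_subset_Ici_self) integrableOn_Ioc_logWeight).mono
        fun w hw => hw.1
  exact hopen.of_subset_closure hlhs (by fun_prop) hsub hdense ⟨hz, hz0⟩

theorem hasSum_pow_add_two_div_factorial (w : ℂ) :
    HasSum (fun n : ℕ => w ^ (n + 2) / (n + 2).factorial) (cexp w - (1 + w)) := by
  have hexp := NormedSpace.expSeries_div_hasSum_exp w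
  rw [← exp_eq_exp_ℂ, ← hasSum_nat_add_iff' 2] at hexp
  simpa [Finset.sum_range_succ] using hexp

theorem pow_add_two_div_factorial_mul_sq (w : ℂ) (n : ℕ) :
    w ^ (n + 2) / ((n + 2).factorial * ((n : ℂ) + 1) ^ 2) =
      w ^ (n + 2) / (n + 2).factorial +
        w ^ 2 * (w ^ n / n.factorial * (1 / ((n : ℂ) + 1) ^ 3 - 1 / ((n : ℂ) + 1) ^ 2)) := by
  have h1 : (n : ℂ) + 1 ≠ 0 := n.cast_add_one_ne_zero
  have h2 : (n : ℂ) + 2 ≠ 0 := by exact_mod_cast (n + 1).succ_ne_zero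
  have hfac : ((n + 2).factorial : ℂ) = (n + 2) * ((n + 1) * n.factorial) := by
    push_cast [Nat.factorial_succ]
    ring
  have hn : (n.factorial : ℂ) ≠ 0 := Nat.cast_ne_zero.2 n.factorial_ne_zero
  rw [hfac]
  field_simp
  ring

theorem hasSum_pow_add_two_div_factorial_mul_sq (z : ℂ) :
    HasSum (fun n : ℕ => (-z) ^ (n + 2) / ((n + 2).factorial * ((n : ℂ) + 1) ^ 2))
      (cexp (-z) - (1 + -z) +
        z ^ 2 * ∫ t in Ioc (0 : ℝ) 1, (logWeight t : ℂ) * cexp (-(z * t))) := by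
  have hmoments := hasSum_integral_mul_cexp_neg_mul measurableSet_Ioc (R := 1)
    (fun t ht => (abs_of_pos ht.1).trans_le ht.2) integrableOn_Ioc_logWeight z
  simp only [(integral_logWeight_mul_pow _).2] at hmoments
  convert! (hasSum_pow_add_two_div_factorial (-z)).add (hmoments.mul_left (z ^ 2)) using 1
  ext n
  rw [pow_add_two_div_factorial_mul_sq, neg_sq]

theorem log_neg_I_mul_ofReal {a : ℝ} (ha : 0 < a) :
    log (-(I * a)) = Real.log a - I * Real.pi / 2 := by
  rw [← neg_mul, mul_comm, log_ofReal_mul ha (neg_ne_zero.2 I_ne_zero), log_neg_I]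
  ring

theorem exp_log_integral_x_squared_general (z : ℂ) (hz : 0 ≤ z.re) (hz0 : z ≠ 0) :
    IntegrableOn (fun x : ℝ => cexp (-(z * x)) * ((Real.log x / x ^ 2 : ℝ) : ℂ)) (Ioi 1) ∧
    Summable (fun n : ℕ => ‖(-z) ^ (n + 2) / ((n + 2).factorial * ((n : ℂ) + 1) ^ 2)‖) ∧
    ∫ x in Ioi (1 : ℝ), cexp (-(z * x)) * ((Real.log x / x ^ 2 : ℝ) : ℂ) =
      1 - z * (((Real.eulerMascheroniConstant + log z) ^ 2 + (Real.pi : ℂ) ^ 2 / 6) / 2 -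
          (Real.eulerMascheroniConstant + log z) + 1) +
        ∑' n : ℕ, (-z) ^ (n + 2) / ((n + 2).factorial * ((n : ℂ) + 1) ^ 2) := by
  have hseries := hasSum_pow_add_two_div_factorial_mul_sq z
  simp only [mul_comm (cexp _)]
  refine ⟨integrableOn_mul_cexp_neg_mul measurableSet_Ioi (Ioi_subset_Ici zero_le_one)
    integrableOn_Ioi_one_log_div_sq.ofReal hz, hseries.summable.norm, ?_⟩
  rw [integral_Ioi_one_log_div_sq_mul_cexp_neg_mul hz hz0, hseries.tsum_eq]
  ring

/-- For every real `a > 0`, the absolutely convergent integral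
`∫₁^∞ e^{iax} (ln x)/x² dx` equals
`1 + ia[-π²/24 + γ(γ/2 + ln a - 1) + (ln a)²/2 - ln a + 1 - (iπ/2)(γ + ln a - 1)]
  + Σ_{n≥1} (ia)^{n+1}/((n+1)! n²)`, the series converging absolutely. -/
theorem exp_log_integral_x_squared (a : ℝ) (ha : 0 < a) :
    IntegrableOn
      (fun x : ℝ => Complex.exp (Complex.I * (a : ℂ) * (x : ℂ)) *
        ((Real.log x / x ^ 2 : ℝ) : ℂ))
      (Set.Ioi (1 : ℝ)) ∧
    Summable (fun n : ℕ =>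
      ‖(Complex.I * (a : ℂ)) ^ (n + 2) / ((n + 2).factorial * ((n : ℂ) + 1) ^ 2)‖) ∧
    (∫ x in Set.Ioi (1 : ℝ),
        Complex.exp (Complex.I * (a : ℂ) * (x : ℂ)) * ((Real.log x / x ^ 2 : ℝ) : ℂ)) =
      1 + Complex.I * (a : ℂ) *
          (-(Real.pi : ℂ) ^ 2 / 24 +
            (Real.eulerMascheroniConstant : ℂ) *
              ((Real.eulerMascheroniConstant : ℂ) / 2 + (Real.log a : ℂ) - 1) +
            (Real.log a : ℂ) ^ 2 / 2 - (Real.log a : ℂ) + 1 -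
            (Complex.I * (Real.pi : ℂ) / 2) *
              ((Real.eulerMascheroniConstant : ℂ) + (Real.log a : ℂ) - 1)) +
        ∑' n : ℕ,
          (Complex.I * (a : ℂ)) ^ (n + 2) / ((n + 2).factorial * ((n : ℂ) + 1) ^ 2) := by
  have hz0 : -(I * a) ≠ 0 := neg_ne_zero.2 (mul_ne_zero I_ne_zero (ofReal_ne_zero.2 ha.ne'))
  have hgen := exp_log_integral_x_squared_general (-(I * a)) (by simp) hz0
  simp only [neg_mul, neg_neg, log_neg_I_mul_ofReal ha] at hgen
  refine ⟨hgen.1, hgen.2.1, hgen.2.2.trans ?_⟩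
  linear_combination (I * a * Real.pi ^ 2 / 8) * I_sq
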